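/- (Theorem 4) Let B be a finite set of elements of the free categorical quasiproduct monoid CQ. Then it is decidable whether the submonoid of CQ generated by B is infinite. -/

import Mathlib

/-- Terms of the free (quasi-)Cartesian monoid: constants `I, L, R`,
composition `comp` (written `*` in the paper) and pairing `pair`. -/
inductive Term : Type
  | I : Term
  | L : Term
  | R : Term
  | comp : Term → Term → Term
  | pair : Term → Term → Term
  deriving DecidableEq

open Term

/-- The rewrite rules (1)-(7), indexed by their number. -/
inductive Rule : ℕ → Term → Term → Prop
  | r1 (x y : Term) : Rule 1 (comp L (pair x y)) x
  | r2 (x y : Term) : Rule 2 (comp R (pair x y)) y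
  | r3 (x y z : Term) : Rule 3 (comp (pair x y) z) (pair (comp x z) (comp y z))
  | r4 (x : Term) : Rule 4 (comp I x) x
  | r5 (x : Term) : Rule 5 (comp x I) x
  | r6 (x : Term) : Rule 6 (pair (comp L x) (comp R x)) x
  | r7 : Rule 7 (pair L R) I

/-- The congruence generated by associativity of `comp`. -/
inductive AssocEq : Term → Term → Prop
  | assoc (a b c : Term) : AssocEq (comp (comp a b) c) (comp a (comp b c))
  | refl (a : Term) : AssocEq a a
  | symm {a b : Term} : AssocEq a b → AssocEq b a
  | trans {a b c : Term} : AssocEq a b → AssocEq b c → AssocEq a c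
  | comp_congr {a a' b b' : Term} :
      AssocEq a a' → AssocEq b b' → AssocEq (comp a b) (comp a' b')
  | pair_congr {a a' b b' : Term} :
      AssocEq a a' → AssocEq b b' → AssocEq (pair a b) (pair a' b')

/-- One-step rewriting by a rule whose index lies in `J`,
closed under replacement of subterms (monotone closure). -/
inductive Step (J : Set ℕ) : Term → Term → Prop
  | rule {n : ℕ} {x y : Term} : n ∈ J → Rule n x y → Step J x y
  | comp_left {a a' b : Term} : Step J a a' → Step J (comp a b) (comp a' b)
  | comp_right {a b b' : Term} : Step J b b' → Step J (comp a b) (comp a b')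
  | pair_left {a a' b : Term} : Step J a a' → Step J (pair a b) (pair a' b)
  | pair_right {a b b' : Term} : Step J b b' → Step J (pair a b) (pair a b')

/-- One-step rewriting modulo associativity. -/
def StepA (J : Set ℕ) (a b : Term) : Prop :=
  ∃ a' b', AssocEq a a' ∧ Step J a' b' ∧ AssocEq b' b

/-- Many-step rewriting `↠_J`: the monotone reflexive transitive closure of
one-step rewriting by the rules in `J`, modulo associativity. -/
def Red (J : Set ℕ) (a b : Term) : Prop :=
  ∃ c, Relation.ReflTransGen (StepA J) a c ∧ AssocEq c b

/-- `a` is in normal form w.r.t. the rules in `J` (modulo associativity). -/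
def NF (J : Set ℕ) (a : Term) : Prop := ∀ b, ¬ StepA J a b

/-- Rules (1)-(7). -/
def rules17 : Set ℕ := {n | 1 ≤ n ∧ n ≤ 7}
/-- Rules (1)-(5). -/
def rules15 : Set ℕ := {n | 1 ≤ n ∧ n ≤ 5}
/-- Rules (1)-(4). -/
def rules14 : Set ℕ := {n | 1 ≤ n ∧ n ≤ 4}
/-- Rules (5), (6), (7). -/
def rules567 : Set ℕ := {5, 6, 7}

/-- The congruence `=_CM` generated by the Cartesian monoid axioms (i)-(iv)
and the monoid axioms for `comp` with unit `I`. -/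
inductive CMEq : Term → Term → Prop
  | proj_left (f g : Term) : CMEq (comp L (pair f g)) f
  | proj_right (f g : Term) : CMEq (comp R (pair f g)) g
  | lift (f g h : Term) : CMEq (comp (pair f g) h) (pair (comp f h) (comp g h))
  | surj : CMEq (pair L R) I
  | assoc (a b c : Term) : CMEq (comp (comp a b) c) (comp a (comp b c))
  | one_mul (a : Term) : CMEq (comp I a) a
  | mul_one (a : Term) : CMEq (comp a I) a
  | refl (a : Term) : CMEq a a
  | symm {a b : Term} : CMEq a b → CMEq b a
  | trans {a b c : Term} : CMEq a b → CMEq b c → CMEq a c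
  | comp_congr {a a' b b' : Term} :
      CMEq a a' → CMEq b b' → CMEq (comp a b) (comp a' b')
  | pair_congr {a a' b b' : Term} :
      CMEq a a' → CMEq b b' → CMEq (pair a b) (pair a' b')

/-- The congruence `=_CQ` generated by the axioms (i)-(iii)
and the monoid axioms (no surjectivity `⟨L,R⟩ = I`). -/
inductive CQEq : Term → Term → Prop
  | proj_left (f g : Term) : CQEq (comp L (pair f g)) f
  | proj_right (f g : Term) : CQEq (comp R (pair f g)) g
  | lift (f g h : Term) : CQEq (comp (pair f g) h) (pair (comp f h) (comp g h))
  | assoc (a b c : Term) : CQEq (comp (comp a b) c) (comp a (comp b c))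
  | one_mul (a : Term) : CQEq (comp I a) a
  | mul_one (a : Term) : CQEq (comp a I) a
  | refl (a : Term) : CQEq a a
  | symm {a b : Term} : CQEq a b → CQEq b a
  | trans {a b c : Term} : CQEq a b → CQEq b c → CQEq a c
  | comp_congr {a a' b b' : Term} :
      CQEq a a' → CQEq b b' → CQEq (comp a b) (comp a' b')
  | pair_congr {a a' b b' : Term} :
      CQEq a a' → CQEq b b' → CQEq (pair a b) (pair a' b')

/-- An injective numerical encoding of terms, used to state computability. -/
def encodeTerm : Term → ℕ
  | I => 0
  | L => 1
  | R => 2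
  | comp a b => 2 * Nat.pair (encodeTerm a) (encodeTerm b) + 3
  | pair a b => 2 * Nat.pair (encodeTerm a) (encodeTerm b) + 4

/-- A numerical encoding of finite lists of terms. -/
def encodeTermList : List Term → ℕ
  | [] => 0
  | a :: l => Nat.pair (encodeTerm a) (encodeTermList l) + 1

/-- The product of a list of terms (with `I` as the empty product). -/
def listProd : List Term → Term
  | [] => I
  | a :: l => comp a (listProd l)

/-- `=_CQ` as a setoid. -/
def cqSetoid : Setoid Term :=
  ⟨CQEq, ⟨fun a => CQEq.refl a, fun h => h.symm, fun h₁ h₂ => h₁.trans h₂⟩⟩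

/-- The free categorical quasiproduct monoid `CQ = T / =_CQ`. -/
def CQ : Type := Quotient cqSetoid

/-- `=_CM` as a setoid. -/
def cmSetoid : Setoid Term :=
  ⟨CMEq, ⟨fun a => CMEq.refl a, fun h => h.symm, fun h₁ h₂ => h₁.trans h₂⟩⟩

/-- The free Cartesian monoid `CM = T / =_CM`. -/
def CM : Type := Quotient cmSetoid

/-- The submonoid of `CQ` generated by (the classes of) the members of `B`,
as a set of elements of `CQ`. -/
def genSubmonoidCQ (B : List Term) : Set CQ :=
  {x | ∃ l : List Term, (∀ t ∈ l, t ∈ B) ∧ Quotient.mk cqSetoid (listProd l) = x}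

/-- The submonoid of `CM` generated by (the classes of) the members of `B`,
as a set of elements of `CM`. -/
def genSubmonoidCM (B : List Term) : Set CM :=
  {x | ∃ l : List Term, (∀ t ∈ l, t ∈ B) ∧ Quotient.mk cmSetoid (listProd l) = x}

/-- A shift: a product (under `comp`) of copies of `L` and `R`,
with `I` as the empty product. -/
inductive IsShift : Term → Prop
  | unit : IsShift I
  | left : IsShift L
  | right : IsShift R
  | comp {s t : Term} : IsShift s → IsShift t → IsShift (comp s t)

/-- The CQ normal form (normal form w.r.t. rules (1)-(5)) of `X` is a shift. -/
def nfIsShift (X : Term) : Prop :=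
  ∃ N, Red rules15 X N ∧ NF rules15 N ∧ IsShift N

/-- The product `F_0 * ⋯ * F_{n-1}` of the first `n` values of a sequence. -/
def prodTake (f : ℕ → Term) (n : ℕ) : Term := listProd ((List.range n).map f)

/-- `B` covers Cantor space: there is an infinite sequence of members of `B`
such that for each shift `S` some finite initial product composed with `S`
has a CQ normal form that is not a shift. -/
def Covers (B : List Term) : Prop :=
  ∃ f : ℕ → Term, (∀ n, f n ∈ B) ∧
    ∀ S, IsShift S → ∃ n, ¬ nfIsShift (comp S (prodTake f n))

/-- The shift `S` is bad for `B`: for every finite sequence of members of `B`,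
the CQ normal form of `S*F_1*⋯*F_n` is a shift. -/
def BadFor (B : List Term) (S : Term) : Prop :=
  ∀ l : List Term, (∀ t ∈ l, t ∈ B) → nfIsShift (comp S (listProd l))

/-- The length of a shift: the number of occurrences of `L` and `R`. -/
def lenLR : Term → ℕ
  | I => 0
  | L => 1
  | R => 1
  | comp a b => lenLR a + lenLR b
  | pair a b => lenLR a + lenLR b

/-- `S` is extenuative for `B`: it is bad for `B` and the CQ normal forms of
`S*F_1*⋯*F_k` (for `F_i` in `B`) have unbounded length. -/
def Extenuative (B : List Term) (S : Term) : Prop :=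
  BadFor B S ∧ ∀ n : ℕ, ∃ l : List Term, (∀ t ∈ l, t ∈ B) ∧
    ∃ N, Red rules15 (comp S (listProd l)) N ∧ NF rules15 N ∧ n ≤ lenLR N

/-- A term represents a right invertible element of CM. -/
def RightInvCM (F : Term) : Prop := ∃ G, CMEq (comp F G) I

/-!
Writing the letters of a shift as a stack of bits, with the rightmost factor on top, a term `a` acts
partially on shifts by `s ↦ s * a`. This action is insensitive to the bottom of the stack, reads and
writes only a bounded window at the top, and is faithful: where `s * a` is not a shift it is a pair,
hence determined by `L * s * a` and `R * s * a`.

If some product of members of `B` pumps a stack, that is, carries `w` to `w ++ x`, or `w ++ x` to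
`w` while being undefined at `w`, then its powers are all distinct. If none does, a pigeonhole
argument shows that no product is undefined on a high stack or raises one by much, so that some
finite set of stacks, containing all those of a fixed height, is closed under `B`; there are then
only finitely many products, because each is determined by its values on low stacks. A pump and a
finite closed set are certificates that can be checked by running an abstract machine, so infinitude
and finiteness are both semidecidable.
-/

section StackMap

variable {α ι : Type*}

/-- A partial transformation of stacks (lists whose head is the top) that is insensitive to what
lies below the part of the stack it consumes. -/
def IsStackMap (f : List α → Option (List α)) : Prop :=
  ∀ ⦃w v : List α⦄ (p : List α), f w = some v → f (w ++ p) = some (v ++ p)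

/-- `f` is defined on all stacks of height at least `K`, and where it is defined it changes the
height by at most `K`. -/
structure HasWindow (f : List α → Option (List α)) (K : ℕ) : Prop where
  isSome_of_le : ∀ w : List α, K ≤ w.length → (f w).isSome
  length_le_add : ∀ w v : List α, f w = some v → v.length ≤ w.length + K
  le_length_add : ∀ w v : List α, f w = some v → w.length ≤ v.length + K

theorem IsStackMap.eq_none_of_append {f : List α → Option (List α)} (hf : IsStackMap f)
    {w p : List α} (h : f (w ++ p) = none) : f w = none := by
  rw [Option.eq_none_iff_forall_ne_some] at h ⊢
  exact fun v hv => h _ (hf p hv)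

theorem IsStackMap.bind {f g : List α → Option (List α)} (hf : IsStackMap f) (hg : IsStackMap g) :
    IsStackMap fun w => (f w).bind g := by
  intro w v p h
  obtain ⟨u, hu, hv⟩ := Option.bind_eq_some_iff.1 h
  exact Option.bind_eq_some_iff.2 ⟨u ++ p, hf p hu, hg p hv⟩

theorem HasWindow.mono {f : List α → Option (List α)} {K K' : ℕ} (h : HasWindow f K)
    (hK : K ≤ K') : HasWindow f K' where
  isSome_of_le w hw := h.isSome_of_le w (hK.trans hw)
  length_le_add w v hv := (h.length_le_add w v hv).trans (by lia)
  le_length_add w v hv := (h.le_length_add w v hv).trans (by lia)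

theorem HasWindow.bind {f g : List α → Option (List α)} {K K' : ℕ} (hf : HasWindow f K)
    (hg : HasWindow g K') : HasWindow (fun w => (f w).bind g) (K + K') where
  isSome_of_le w hw := by
    obtain ⟨u, hu⟩ := Option.isSome_iff_exists.1 (hf.isSome_of_le w (by lia))
    have := hf.le_length_add w u hu
    simpa only [hu, Option.bind_some] using hg.isSome_of_le u (by lia)
  length_le_add w v h := by
    obtain ⟨u, hu, hv⟩ := Option.bind_eq_some_iff.1 h
    have := hf.length_le_add w u hu
    have := hg.length_le_add u v hv
    lia
  le_length_add w v h := by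
    obtain ⟨u, hu, hv⟩ := Option.bind_eq_some_iff.1 h
    have := hf.le_length_add w u hu
    have := hg.le_length_add u v hv
    lia

theorem exists_forall_mem_hasWindow {φ : ι → List α → Option (List α)}
    (hφ : ∀ i, ∃ K, HasWindow (φ i) K) (B : List ι) : ∃ K, ∀ i ∈ B, HasWindow (φ i) K := by
  choose K hK using hφ
  exact ⟨(B.map K).sum, fun i hi => (hK i).mono (List.le_sum_of_mem (List.mem_map_of_mem hi))⟩

/-- A stack map that is total on stacks of height `N` is determined by its values on stacks of
height at most `N`. -/
theorem finite_setOf_isStackMap [Finite α] (N M : ℕ) :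
    {f : List α → Option (List α) | IsStackMap f ∧
      ∀ w, w.length = N → ∃ v, v.length ≤ M ∧ f w = some v}.Finite := by
  rcases isEmpty_or_nonempty α with _ | _
  · exact Set.toFinite _
  have hdom : Finite {w : List α // w.length ≤ N} := List.finite_length_le α N
  have hcod : (insert none (some '' {v : List α | v.length ≤ M})).Finite :=
    ((List.finite_length_le α M).image _).insert _
  refine Set.Finite.of_finite_image
    (f := fun f (w : {w : List α // w.length ≤ N}) => f w)
    ((Set.Finite.pi' fun _ => hcod).subset ?_) ?_
  · rintro _ ⟨f, ⟨hf, hN⟩, rfl⟩ ⟨w, hw⟩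
    rcases hv : f w with _ | v
    · simp [hv]
    · let a : α := Classical.arbitrary α
      obtain ⟨u, hu, hfu⟩ := hN (w ++ List.replicate (N - w.length) a) (by
        simp only [List.length_append, List.length_replicate]; lia)
      rw [hf _ hv, Option.some.injEq] at hfu
      have hvM : v.length ≤ M := by
        rw [← hfu, List.length_append] at hu
        lia
      simp [hv, hvM]
  · rintro f ⟨hf, hfN⟩ g ⟨hg, -⟩ heq
    have hfg : ∀ w : List α, w.length ≤ N → f w = g w := fun w hw => congrFun heq ⟨w, hw⟩
    funext w
    rcases le_total w.length N with hw | hw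
    · exact hfg w hw
    · have hlen : (w.take N).length = N := by simp [hw]
      obtain ⟨v, -, hv⟩ := hfN _ hlen
      rw [← List.take_append_drop N w, hf _ hv, hg _ ((hfg _ hlen.le).symm.trans hv)]

end StackMap

section Run

variable {α ι : Type*} (φ : ι → List α → Option (List α))

/-- The successive application to `w` of the transformations named by `l`, first entry first. -/
def run (l : List ι) (w : List α) : Option (List α) :=
  l.foldlM (fun w i => φ i w) w

/-- `f` carries `w` to `w ++ x`, or is undefined at `w` and carries `w ++ x` to `w`, where `x` is
nonempty; iterating `f` then pumps `x` up or down. -/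
def IsPump (f : List α → Option (List α)) (w x : List α) : Prop :=
  x ≠ [] ∧ (f w = some (w ++ x) ∨ f w = none ∧ f (w ++ x) = some w)

/-- `W` is closed under the transformations in `B`, which are all defined on it, and contains every
stack of height `N`. -/
def IsTrap (B : List ι) (N : ℕ) (W : List (List α)) : Prop :=
  (∀ w : List α, w.length = N → w ∈ W) ∧ ∀ w ∈ W, ∀ i ∈ B, ∃ v ∈ W, φ i w = some v

/-- The run of `l` from `w` is defined and never touches the bottom segment `p` of the stack. -/
def RunsAbove (l : List ι) (p w : List α) : Prop :=
  ∃ y, w = y ++ p ∧ (run φ l y).isSome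

@[simp]
theorem run_nil (w : List α) : run φ [] w = some w := rfl

@[simp]
theorem run_cons (i : ι) (l : List ι) (w : List α) :
    run φ (i :: l) w = (φ i w).bind (run φ l) := rfl

theorem run_append (l m : List ι) (w : List α) :
    run φ (l ++ m) w = (run φ l w).bind (run φ m) :=
  List.foldlM_append

variable {φ} {l m B : List ι} {K : ℕ}

theorem isStackMap_run (hφ : ∀ i, IsStackMap (φ i)) (l : List ι) : IsStackMap (run φ l) := by
  induction l with
  | nil => rintro w _ p ⟨rfl⟩; rfl
  | cons i l ih => exact (hφ i).bind ih

theorem run_flatten_replicate_of_eq_append (hφ : ∀ i, IsStackMap (φ i)) {w x : List α}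
    (h : run φ m w = some (w ++ x)) (n : ℕ) :
    run φ (List.replicate n m).flatten w = some (w ++ (List.replicate n x).flatten) := by
  induction n with
  | zero => simp
  | succ n ih =>
    rw [List.replicate_succ, List.flatten_cons, run_append, h, Option.bind_some,
      isStackMap_run hφ _ x ih]
    simp [List.replicate_succ']

theorem run_flatten_replicate_append (hφ : ∀ i, IsStackMap (φ i)) {w x : List α}
    (h : run φ m (w ++ x) = some w) (n : ℕ) :
    run φ (List.replicate n m).flatten (w ++ (List.replicate n x).flatten) = some w := by
  induction n with
  | zero => simp
  | succ n ih =>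
    rw [List.replicate_succ, List.flatten_cons, run_append, List.replicate_succ, List.flatten_cons,
      ← List.append_assoc, isStackMap_run hφ _ _ h, Option.bind_some, ih]

theorem IsPump.injective_run_flatten_replicate (hφ : ∀ i, IsStackMap (φ i)) {w x : List α}
    (h : IsPump (run φ m) w x) :
    Function.Injective fun n => run φ (List.replicate n m).flatten := by
  obtain ⟨hx, hgrow | ⟨hnone, hshrink⟩⟩ := h
  · intro n k hnk
    have hw := congrFun hnk w
    simp only [run_flatten_replicate_of_eq_append hφ hgrow, Option.some.injEq,
      List.append_cancel_left_eq] at hw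
    simpa [hx] using congrArg List.length hw
  · refine Function.Injective.of_lt_imp_ne fun n k hnk heq => ?_
    obtain ⟨d, rfl⟩ := Nat.exists_eq_add_of_lt hnk
    have hdown := run_flatten_replicate_append hφ hshrink n
    have hblocked : run φ (List.replicate (n + d + 1) m).flatten
        (w ++ (List.replicate n x).flatten) = none := by
      rw [add_assoc, List.replicate_add, List.flatten_append, run_append, hdown, Option.bind_some,
        List.replicate_succ, List.flatten_cons, run_append, hnone, Option.bind_none]
    simp [← congrFun heq, hdown] at hblocked

theorem IsPump.infinite_image_run (hφ : ∀ i, IsStackMap (φ i)) (hm : m ⊆ B) {w x : List α}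
    (h : IsPump (run φ m) w x) : (run φ '' {l | l ⊆ B}).Infinite :=
  Set.infinite_of_injective_forall_mem (h.injective_run_flatten_replicate hφ) fun n =>
    ⟨_, fun i hi => by
      obtain ⟨l, hl, hil⟩ := List.mem_flatten.1 hi
      exact hm (List.eq_of_mem_replicate hl ▸ hil), rfl⟩

theorem IsTrap.exists_run_eq_some {N : ℕ} {W : List (List α)} (hW : IsTrap φ B N W) (hl : l ⊆ B)
    {w : List α} (hw : w ∈ W) : ∃ v ∈ W, run φ l w = some v := by
  induction l generalizing w with
  | nil => exact ⟨w, hw, rfl⟩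
  | cons i l ih =>
    rw [List.cons_subset] at hl
    obtain ⟨u, hu, hiu⟩ := hW.2 w hw i hl.1
    obtain ⟨v, hv, huv⟩ := ih hl.2 hu
    exact ⟨v, hv, by rw [run_cons, hiu, Option.bind_some, huv]⟩

theorem IsTrap.finite_image_run [Finite α] (hφ : ∀ i, IsStackMap (φ i)) {N : ℕ}
    {W : List (List α)} (hW : IsTrap φ B N W) : (run φ '' {l | l ⊆ B}).Finite := by
  refine (finite_setOf_isStackMap N (W.map List.length).sum).subset ?_
  rintro _ ⟨l, hl, rfl⟩
  refine ⟨isStackMap_run hφ l, fun w hw => ?_⟩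
  obtain ⟨v, hv, hlv⟩ := hW.exists_run_eq_some hl (hW.1 w hw)
  exact ⟨v, List.le_sum_of_mem (List.mem_map_of_mem hv), hlv⟩

theorem exists_prefix_forall_run_eq_none {w : List α} (h : run φ l w = none) :
    ∃ p y, p <+: l ∧ run φ p w = some y ∧ (∃ i ∈ l, φ i y = none) ∧
      ∀ q, q ≠ [] → p ++ q <+: l → run φ q y = none := by
  induction l generalizing w with
  | nil => cases h
  | cons i l ih =>
    rcases hi : φ i w with _ | u
    · refine ⟨[], w, List.nil_prefix, rfl, ⟨i, List.mem_cons_self, hi⟩, fun q hq hql => ?_⟩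
      obtain ⟨q, rfl, -⟩ := (List.prefix_cons_iff.1 hql).resolve_left hq
      rw [run_cons, hi, Option.bind_none]
    · rw [run_cons, hi, Option.bind_some] at h
      obtain ⟨p, y, hpl, hpy, ⟨j, hj, hjy⟩, hblock⟩ := ih h
      refine ⟨i :: p, y, (List.cons_prefix_cons.2 ⟨rfl, hpl⟩), by rw [run_cons, hi]; exact hpy,
        ⟨j, List.mem_cons_of_mem i hj, hjy⟩, fun q hq hql => hblock q hq ?_⟩
      exact (List.cons_prefix_cons.1 hql).2

/-- Each prefix of `s` blocks in a stack of `S`, the longer ones later, and two prefixes must block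
in the same stack; the part of `l` read in between is a pump. -/
theorem exists_isPump_of_run_eq_none (hφ : ∀ i, IsStackMap (φ i)) {S : Finset (List α)}
    (hS : ∀ i ∈ l, ∀ y, φ i y = none → y ∈ S) {s : List α} (hs : S.card ≤ s.length)
    (h : run φ l s = none) : ∃ m, m <:+: l ∧ ∃ w x, IsPump (run φ m) w x := by
  have hblocked (i : ℕ) : run φ l (s.take i) = none :=
    (isStackMap_run hφ l).eq_none_of_append (p := s.drop i) (by rwa [List.take_append_drop])
  choose p y hpl hpy hstuck hblock using fun i => exists_prefix_forall_run_eq_none (hblocked i)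
  have hyS (i : ℕ) : y i ∈ S := by
    obtain ⟨k, hk, hky⟩ := hstuck i
    exact hS k hk _ hky
  obtain ⟨i, hi, j, hj, hij, hyij⟩ := Finset.exists_ne_map_eq_of_card_lt_of_maps_to
    (s := Finset.range (s.length + 1)) (t := S) (f := y) (by rw [Finset.card_range]; lia)
    fun i _ => hyS i
  wlog hlt : i < j generalizing i j
  · exact this j hj i hi hij.symm hyij.symm (by lia)
  obtain ⟨x, hx⟩ : s.take i <+: s.take j := List.take_prefix_take_left hlt.le
  have hx_ne : x ≠ [] := by
    rintro rfl
    have := congrArg List.length hx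
    simp only [List.append_nil, List.length_take, Finset.mem_range] at this hj
    lia
  have hpx : run φ (p i) (s.take j) = some (y j ++ x) := by
    rw [← hx, ← hyij]
    exact isStackMap_run hφ _ x (hpy i)
  rcases List.prefix_or_prefix_of_prefix (hpl i) (hpl j) with ⟨m, hm⟩ | ⟨m, hm⟩
  · have hmx : run φ m (y j ++ x) = some (y j) := by
      simpa [← hm, run_append, hpx] using hpy j
    have hm_ne : m ≠ [] := by
      rintro rfl
      simp [hx_ne] at hmx
    have hpm : p i ++ m <+: l := hm ▸ hpl j
    refine ⟨m, (List.suffix_append _ _).isInfix.trans hpm.isInfix, y j, x, hx_ne, Or.inr ⟨?_, hmx⟩⟩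
    rw [← hyij]
    exact hblock i m hm_ne hpm
  · have hmx : run φ m (y j) = some (y j ++ x) := by
      simpa [← hm, run_append, hpy j] using hpx
    rcases eq_or_ne m [] with rfl | hm_ne
    · simp [hx_ne] at hmx
    · rw [hblock j m hm_ne (hm ▸ hpl i)] at hmx
      cases hmx

/-- On a stack that exceeds `p` by more than its window, `i` does not touch `p`. -/
theorem HasWindow.length_le_of_not_runsAbove {i : ι} (hφ : IsStackMap (φ i))
    (hK : HasWindow (φ i) K) {p y w : List α} (hw : φ i w = some (y ++ p))
    (hy : (run φ l y).isSome) (h : ¬ RunsAbove φ (i :: l) p w) : y.length ≤ 2 * K := by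
  by_contra! hlong
  have hlen := hK.length_le_add w _ hw
  rw [List.length_append] at hlen
  obtain ⟨a, b, rfl, hb⟩ : ∃ a b, w = a ++ b ∧ b.length = p.length :=
    ⟨_, _, (List.take_append_drop (w.length - p.length) w).symm, by rw [List.length_drop]; lia⟩
  rw [List.length_append] at hlen
  obtain ⟨v, hv⟩ := Option.isSome_iff_exists.1 (hK.isSome_of_le a (by lia))
  obtain ⟨rfl, rfl⟩ : v = y ∧ b = p :=
    List.append_inj' (Option.some.inj ((hφ b hv).symm.trans hw)) hb
  exact h ⟨a, rfl, by rwa [run_cons, hv]⟩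

theorem exists_first_runsAbove (hφ : ∀ i, IsStackMap (φ i)) (hK : ∀ i ∈ l, HasWindow (φ i) K)
    {s z p : List α} (hsp : ¬ RunsAbove φ l p s) (h : run φ l s = some (z ++ p)) :
    ∃ l₁ l₂ y, l = l₁ ++ l₂ ∧ run φ l₁ s = some (y ++ p) ∧ (run φ l₂ y).isSome ∧
      y.length ≤ 2 * K ∧ ∀ m₁ m₂ w, l = m₁ ++ m₂ → run φ m₁ s = some w → RunsAbove φ m₂ p w →
        l₁ <+: m₁ := by
  induction l generalizing s with
  | nil => exact absurd ⟨z, Option.some.inj h, rfl⟩ hsp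
  | cons i l ih =>
    rw [run_cons] at h
    obtain ⟨u, hu, huz⟩ := Option.bind_eq_some_iff.1 h
    by_cases hup : RunsAbove φ l p u
    · obtain ⟨y, rfl, hy⟩ := hup
      refine ⟨[i], l, y, rfl, by simp [hu], hy,
        (hK i List.mem_cons_self).length_le_of_not_runsAbove (hφ i) hu hy hsp, ?_⟩
      rintro (_ | ⟨j, m₁⟩) m₂ w hm hw hwp
      · obtain rfl : s = w := Option.some.inj hw
        exact absurd (hm ▸ hwp) hsp
      · exact List.cons_prefix_cons.2 ⟨(List.cons.inj hm).1, List.nil_prefix⟩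
    · obtain ⟨l₁, l₂, y, rfl, hy, hy₂, hyK, hfirst⟩ :=
        ih (fun j hj => hK j (List.mem_cons_of_mem i hj)) hup huz
      refine ⟨i :: l₁, l₂, y, rfl, by simp [hu, hy], hy₂, hyK, ?_⟩
      rintro (_ | ⟨j, m₁⟩) m₂ w hm hw hwp
      · obtain rfl : s = w := Option.some.inj hw
        exact absurd (hm ▸ hwp) hsp
      · obtain ⟨rfl, htail⟩ := List.cons.inj hm
        rw [run_cons, hu] at hw
        exact List.cons_prefix_cons.2 ⟨rfl, hfirst m₁ m₂ w htail hw hwp⟩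

theorem IsPump.of_run_eq_append (hφ : ∀ i, IsStackMap (φ i)) {l₁ l₂ : List ι} {s y x p : List α}
    (hx : x ≠ []) (h₁ : run φ l₁ s = some (y ++ p)) (hy : (run φ (m ++ l₂) y).isSome)
    (h₂ : run φ (l₁ ++ m) s = some (y ++ x ++ p)) : IsPump (run φ m) y x := by
  obtain ⟨v, hv⟩ := Option.isSome_iff_exists.1 hy
  rw [run_append] at hv
  obtain ⟨q, hq, -⟩ := Option.bind_eq_some_iff.1 hv
  rw [run_append, h₁, Option.bind_some, isStackMap_run hφ m p hq] at h₂
  exact ⟨hx, Or.inl (List.append_cancel_right (Option.some.inj h₂) ▸ hq)⟩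

/-- For each height `k` between those of `s` and `z`, consider the first moment from which on the
run stays above height `k`: few stacks can lie on top of the final bottom segment of height `k` at
that moment, so some stack occurs for two values of `k`; the part of `l` read in between is a
pump. -/
theorem exists_isPump_of_lt_length (hφ : ∀ i, IsStackMap (φ i)) (hK : ∀ i ∈ l, HasWindow (φ i) K)
    {S : Finset (List α)} (hS : ∀ y : List α, y.length ≤ 2 * K → y ∈ S) {s z : List α}
    (h : run φ l s = some z) (hz : s.length + S.card < z.length) :
    ∃ m, m <:+: l ∧ ∃ w x, IsPump (run φ m) w x := by
  have hrise (k : ℕ) (hk : k ∈ Finset.Ioc s.length z.length) :=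
    exists_first_runsAbove (s := s) (z := z.rdrop k) (p := z.rtake k) hφ hK
      (by
        rintro ⟨y, hy, -⟩
        have := congrArg List.length hy
        simp only [List.rtake, List.length_append, List.length_drop, Finset.mem_Ioc] at this hk
        lia)
      (by rw [h, List.rdrop, List.rtake, List.take_append_drop])
  choose! l₁ l₂ y hl hy hy₂ hyK hfirst using hrise
  obtain ⟨i, hi, j, hj, hij, hyij⟩ := Finset.exists_ne_map_eq_of_card_lt_of_maps_to
    (s := Finset.Ioc s.length z.length) (t := S) (f := y) (by rw [Nat.card_Ioc]; lia)
    fun i hi => hS _ (hyK i hi)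
  wlog hlt : i < j generalizing i j
  · exact this j hj i hi hij.symm hyij.symm (by lia)
  obtain ⟨x, hx⟩ : z.rtake i <:+ z.rtake j := List.drop_suffix_drop_left z (by lia)
  have hx_ne : x ≠ [] := by
    rintro rfl
    have := congrArg List.length hx
    simp only [List.rtake, List.nil_append, List.length_drop, Finset.mem_Ioc] at this hj
    lia
  have hyj : run φ (l₁ j) s = some (y i ++ x ++ z.rtake i) := by
    rw [hy j hj, ← hx, hyij, List.append_assoc]
  obtain ⟨v, hv⟩ := Option.isSome_iff_exists.1 (hy₂ j hj)
  obtain ⟨m, hm⟩ : l₁ i <+: l₁ j := hfirst i hi (l₁ j) (l₂ j) _ (hl j hj) hyj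
    ⟨y i ++ x, rfl, by rw [hyij, isStackMap_run hφ _ x hv]; rfl⟩
  have hl₂ : l₂ i = m ++ l₂ j := by
    rw [← List.append_cancel_left_eq (l₁ i), ← List.append_assoc, hm, ← hl i hi, ← hl j hj]
  exact ⟨m, ⟨l₁ i, l₂ j, by rw [hm, ← hl j hj]⟩, y i, x,
    .of_run_eq_append hφ hx_ne (hy i hi) (hl₂ ▸ hy₂ i hi) (hm ▸ hyj)⟩

theorem exists_run_eq_some_of_forall_not_isPump (hφ : ∀ i, IsStackMap (φ i))
    (hK : ∀ i ∈ l, HasWindow (φ i) K) {S : Finset (List α)}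
    (hS : ∀ y : List α, y.length ≤ 2 * K → y ∈ S)
    (hpump : ∀ m, m <:+: l → ∀ w x, ¬ IsPump (run φ m) w x) {s : List α}
    (hs : S.card ≤ s.length) : ∃ z, z.length ≤ s.length + S.card ∧ run φ l s = some z := by
  rcases hz : run φ l s with _ | z
  · have hstuck (i) (hi : i ∈ l) (y) (hy : φ i y = none) : y ∈ S := by
      refine hS y ?_
      by_contra! hlong
      simpa [hy] using (hK i hi).isSome_of_le y (by lia)
    obtain ⟨m, hm, w, x, hwx⟩ := exists_isPump_of_run_eq_none hφ hstuck hs hz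
    exact absurd hwx (hpump m hm w x)
  · refine ⟨z, ?_, rfl⟩
    by_contra! hlong
    obtain ⟨m, hm, w, x, hwx⟩ := exists_isPump_of_lt_length hφ hK hS hz hlong
    exact hpump m hm w x hwx

/-- Without a pump, the stacks reached from those of height `N`, for a large `N`, form a trap. -/
theorem exists_isTrap_or_exists_isPump [Finite α] (hφ : ∀ i, IsStackMap (φ i))
    (hK : ∀ i ∈ B, HasWindow (φ i) K) :
    (∃ N W, IsTrap φ B N W) ∨ ∃ m ⊆ B, ∃ w x, IsPump (run φ m) w x := by
  refine or_iff_not_imp_right.2 fun hpump => ?_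
  push Not at hpump
  let S := (List.finite_length_le α (2 * K)).toFinset
  have hS (y : List α) (hy : y.length ≤ 2 * K) : y ∈ S := by simpa [S] using hy
  have hreach {l : List ι} (hl : l ⊆ B) {s : List α} (hs : s.length = S.card) :
      ∃ z, z.length ≤ s.length + S.card ∧ run φ l s = some z :=
    exists_run_eq_some_of_forall_not_isPump hφ (fun i hi => hK i (hl hi)) hS
      (fun m hm => hpump m fun i hi => hl (hm.subset hi)) hs.ge
  let V : Set (List α) := {z | ∃ l ⊆ B, ∃ s, s.length = S.card ∧ run φ l s = some z}
  have hV : V.Finite := by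
    refine (List.finite_length_le α (S.card + S.card)).subset ?_
    rintro z ⟨l, hl, s, hs, hz⟩
    obtain ⟨z', hz', hlz'⟩ := hreach hl hs
    obtain rfl : z' = z := Option.some.inj (hlz'.symm.trans hz)
    exact hs ▸ hz'
  have hmem {z : List α} : z ∈ hV.toFinset.toList ↔ z ∈ V := by simp
  refine ⟨S.card, hV.toFinset.toList, fun s hs => ?_, fun z hz i hi => ?_⟩
  · exact hmem.2 ⟨[], List.nil_subset B, s, hs, rfl⟩
  · obtain ⟨l, hl, s, hs, hlz⟩ := hmem.1 hz
    have hli : l ++ [i] ⊆ B := List.append_subset.2 ⟨hl, by simpa using hi⟩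
    obtain ⟨v, -, hv⟩ := hreach hli hs
    refine ⟨v, hmem.2 ⟨_, hli, s, hs, hv⟩, ?_⟩
    simpa [run_append, hlz, Option.bind_eq_some_iff] using hv

theorem infinite_image_run_iff_exists_isPump [Finite α] (hφ : ∀ i, IsStackMap (φ i))
    (hK : ∀ i, ∃ K, HasWindow (φ i) K) :
    (run φ '' {l | l ⊆ B}).Infinite ↔ ∃ m ⊆ B, ∃ w x, IsPump (run φ m) w x := by
  obtain ⟨K, hBK⟩ := exists_forall_mem_hasWindow hK B
  refine ⟨fun h => ?_, fun ⟨m, hm, w, x, hwx⟩ => hwx.infinite_image_run hφ hm⟩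
  exact (exists_isTrap_or_exists_isPump hφ hBK).resolve_left fun ⟨N, W, hW⟩ =>
    h (hW.finite_image_run hφ)

theorem finite_image_run_iff_exists_isTrap [Finite α] (hφ : ∀ i, IsStackMap (φ i))
    (hK : ∀ i, ∃ K, HasWindow (φ i) K) :
    (run φ '' {l | l ⊆ B}).Finite ↔ ∃ N W, IsTrap φ B N W := by
  obtain ⟨K, hBK⟩ := exists_forall_mem_hasWindow hK B
  refine ⟨fun h => ?_, fun ⟨N, W, hW⟩ => hW.finite_image_run hφ⟩
  exact (exists_isTrap_or_exists_isPump hφ hBK).resolve_right fun ⟨m, hm, w, x, hwx⟩ =>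
    hwx.infinite_image_run hφ hm h

end Run

section Action

/-- The action of `CQ` on stacks of bits: a stack `[b₁, …, bₙ]` stands for the shift `Xₙ * ⋯ * X₁`
with `Xᵢ = L` if `bᵢ` is true and `Xᵢ = R` otherwise, and `a` carries the shift `s` to `s * a` if
that is again a shift. -/
def act : Term → List Bool → Option (List Bool)
  | I, w => some w
  | L, w => some (true :: w)
  | R, w => some (false :: w)
  | comp a b, w => (act a w).bind (act b)
  | pair _ _, [] => none
  | pair a _, true :: w => act a w
  | pair _ b, false :: w => act b w

theorem isStackMap_act (a : Term) : IsStackMap (act a) := by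
  induction a with
  | I => rintro w _ p ⟨rfl⟩; rfl
  | L => rintro w _ p ⟨rfl⟩; rfl
  | R => rintro w _ p ⟨rfl⟩; rfl
  | comp a b iha ihb => exact iha.bind ihb
  | pair a b iha ihb =>
    rintro (_ | ⟨_ | _, w⟩) v p h
    · cases h
    · exact ihb p h
    · exact iha p h

theorem hasWindow_act_pair {a b : Term} {K : ℕ} (ha : HasWindow (act a) K)
    (hb : HasWindow (act b) K) : HasWindow (act (pair a b)) (K + 1) where
  isSome_of_le
    | [], hw => by simp at hw
    | true :: w, hw => ha.isSome_of_le w (by simpa using hw)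
    | false :: w, hw => hb.isSome_of_le w (by simpa using hw)
  length_le_add
    | true :: w, v, h => (ha.length_le_add w v h).trans (by rw [List.length_cons]; lia)
    | false :: w, v, h => (hb.length_le_add w v h).trans (by rw [List.length_cons]; lia)
  le_length_add
    | true :: w, v, h => by have := ha.le_length_add w v h; rw [List.length_cons]; lia
    | false :: w, v, h => by have := hb.le_length_add w v h; rw [List.length_cons]; lia

theorem exists_hasWindow_act (a : Term) : ∃ K, HasWindow (act a) K := by
  induction a with
  | I => exact ⟨0, by constructor <;> simp [act]⟩
  | L => exact ⟨1, by constructor <;> simp [act]; lia⟩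
  | R => exact ⟨1, by constructor <;> simp [act]; lia⟩
  | comp a b iha ihb =>
    obtain ⟨K, hK⟩ := iha
    obtain ⟨K', hK'⟩ := ihb
    exact ⟨K + K', hK.bind hK'⟩
  | pair a b iha ihb =>
    obtain ⟨K, hK⟩ := iha
    obtain ⟨K', hK'⟩ := ihb
    exact ⟨_, hasWindow_act_pair (hK.mono (le_max_left K K')) (hK'.mono (le_max_right K K'))⟩

theorem act_listProd (l : List Term) : act (listProd l) = run act l := by
  induction l with
  | nil => rfl
  | cons a l ih => funext w; rw [listProd, act, ih, run_cons]

theorem CQEq.act_eq {a b : Term} (h : CQEq a b) : act a = act b := by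
  induction h with
  | proj_left | proj_right | one_mul | refl => rfl
  | lift => funext w; rcases w with _ | ⟨_ | _, w⟩ <;> rfl
  | assoc a => funext w; exact Option.bind_assoc (act a w) _ _
  | mul_one a => funext w; exact Option.bind_fun_some (act a w)
  | symm _ ih => exact ih.symm
  | trans _ _ ih₁ ih₂ => exact ih₁.trans ih₂
  | comp_congr _ _ ih₁ ih₂ => funext w; rw [act, act, ih₁, ih₂]
  | pair_congr _ _ ih₁ ih₂ => funext w; rcases w with _ | ⟨_ | _, w⟩ <;> simp only [act, ih₁, ih₂]

end Action

namespace CQ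

/-- The class of a term in `CQ`. -/
def mk (a : Term) : CQ := Quotient.mk cqSetoid a

instance : Monoid CQ where
  mul := Quotient.map₂ comp fun _ _ h _ _ h' => h.comp_congr h'
  mul_assoc := by rintro ⟨a⟩ ⟨b⟩ ⟨c⟩; exact Quotient.sound (.assoc a b c)
  one := mk I
  one_mul := by rintro ⟨a⟩; exact Quotient.sound (.one_mul a)
  mul_one := by rintro ⟨a⟩; exact Quotient.sound (.mul_one a)

/-- The operation of `CQ` induced by `Term.pair`. -/
def pairing : CQ → CQ → CQ :=
  Quotient.map₂ pair fun _ _ h _ _ h' => h.pair_congr h'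

theorem mk_L_mul_pairing (x y : CQ) : mk L * pairing x y = x := by
  rcases x, y with ⟨⟨a⟩, ⟨b⟩⟩
  exact Quotient.sound (.proj_left a b)

theorem mk_R_mul_pairing (x y : CQ) : mk R * pairing x y = y := by
  rcases x, y with ⟨⟨a⟩, ⟨b⟩⟩
  exact Quotient.sound (.proj_right a b)

theorem pairing_mul (x y z : CQ) : pairing x y * z = pairing (x * z) (y * z) := by
  rcases x, y, z with ⟨⟨a⟩, ⟨b⟩, ⟨c⟩⟩
  exact Quotient.sound (.lift a b c)

theorem mk_comp (a b : Term) : mk (comp a b) = mk a * mk b := rfl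

theorem mk_pair (a b : Term) : mk (pair a b) = pairing (mk a) (mk b) := rfl

/-- The shift encoded by a stack of bits, its head being the rightmost factor. -/
def shift (w : List Bool) : CQ :=
  (w.map fun b => mk (if b then L else R)).reverse.prod

theorem shift_cons (b : Bool) (w : List Bool) :
    shift (b :: w) = shift w * mk (if b then L else R) := by
  simp [shift]

theorem shift_concat (w : List Bool) (b : Bool) :
    shift (w ++ [b]) = mk (if b then L else R) * shift w := by
  simp [shift]

theorem shift_true_cons_mul_mk_pair (w : List Bool) (a b : Term) :
    shift (true :: w) * mk (pair a b) = shift w * mk a := by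
  rw [shift_cons, if_pos rfl, mul_assoc, mk_pair, mk_L_mul_pairing]

theorem shift_false_cons_mul_mk_pair (w : List Bool) (a b : Term) :
    shift (false :: w) * mk (pair a b) = shift w * mk b := by
  rw [shift_cons, if_neg (by decide), mul_assoc, mk_pair, mk_R_mul_pairing]

theorem shift_mul_mk_of_act_eq_some {a : Term} {w v : List Bool} (h : act a w = some v) :
    shift w * mk a = shift v := by
  induction a generalizing w v with
  | I => cases h; exact mul_one _
  | L => cases h; rw [shift_cons, if_pos rfl]
  | R => cases h; rw [shift_cons, if_neg (by decide)]
  | comp a b iha ihb =>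
    obtain ⟨u, hu, hv⟩ := Option.bind_eq_some_iff.1 h
    rw [mk_comp, ← mul_assoc, iha hu, ihb hv]
  | pair a b iha ihb =>
    rcases w with _ | ⟨_ | _, w⟩
    · cases h
    · rw [shift_false_cons_mul_mk_pair, ihb h]
    · rw [shift_true_cons_mul_mk_pair, iha h]

theorem exists_pairing_of_act_eq_none {a : Term} {w : List Bool} (h : act a w = none) :
    ∃ x y, shift w * mk a = pairing x y := by
  induction a generalizing w with
  | I | L | R => cases h
  | comp a b iha ihb =>
    rw [mk_comp, ← mul_assoc]
    rcases hw : act a w with _ | u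
    · obtain ⟨x, y, hxy⟩ := iha hw
      exact ⟨x * mk b, y * mk b, by rw [hxy, pairing_mul]⟩
    · rw [shift_mul_mk_of_act_eq_some hw]
      rw [act, hw] at h
      exact ihb h
  | pair a b iha ihb =>
    rcases w with _ | ⟨_ | _, w⟩
    · exact ⟨mk a, mk b, one_mul _⟩
    · rw [shift_false_cons_mul_mk_pair]
      exact ihb h
    · rw [shift_true_cons_mul_mk_pair]
      exact iha h

/-- If `s * a` is not a shift, then the length of `s` is bounded and `s * a` is a pair, determined
by `L * s * a` and `R * s * a`; so one can induct downwards on the length of `s`. -/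
theorem mk_eq_mk_of_act_eq {a b : Term} (h : act a = act b) : mk a = mk b := by
  obtain ⟨K, hK⟩ := exists_hasWindow_act a
  suffices hshift : ∀ n w, K - w.length = n → shift w * mk a = shift w * mk b from
    by simpa [shift] using hshift _ [] rfl
  intro n
  induction n using Nat.strong_induction_on with | _ n ih =>
  intro w hn
  rcases hw : act a w with _ | v
  · have hlt : w.length < K := by
      by_contra! hle
      simpa [hw] using hK.isSome_of_le w hle
    obtain ⟨x, y, hxy⟩ := exists_pairing_of_act_eq_none hw
    obtain ⟨x', y', hxy'⟩ := exists_pairing_of_act_eq_none (h ▸ hw)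
    have hproj (c : Bool) : mk (if c then L else R) * pairing x y =
        mk (if c then L else R) * pairing x' y' := by
      rw [← hxy, ← hxy', ← mul_assoc, ← mul_assoc, ← shift_concat]
      exact ih _ (by rw [List.length_append, List.length_singleton]; lia) _ rfl
    obtain rfl : x = x' := by simpa only [if_true, mk_L_mul_pairing] using hproj true
    obtain rfl : y = y' := by simpa [mk_R_mul_pairing] using hproj false
    rw [hxy, hxy']
  · rw [shift_mul_mk_of_act_eq_some hw, shift_mul_mk_of_act_eq_some (h ▸ hw)]

/-- The stack map by which an element of `CQ` acts. -/
def stackMap : CQ → List Bool → Option (List Bool) :=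
  Quotient.lift act fun _ _ => CQEq.act_eq

theorem stackMap_injective : Function.Injective stackMap := by
  rintro ⟨a⟩ ⟨b⟩ h
  exact mk_eq_mk_of_act_eq h

theorem stackMap_image_genSubmonoidCQ (B : List Term) :
    stackMap '' genSubmonoidCQ B = run act '' {l | l ⊆ B} := by
  have hmk (l : List Term) : stackMap (mk (listProd l)) = run act l := act_listProd l
  ext f
  constructor
  · rintro ⟨_, ⟨l, hl, rfl⟩, rfl⟩
    exact ⟨l, hl, (hmk l).symm⟩
  · rintro ⟨l, hl, rfl⟩
    exact ⟨_, ⟨l, hl, rfl⟩, hmk l⟩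

end CQ

theorem infinite_genSubmonoidCQ_iff_exists_isPump (B : List Term) :
    (genSubmonoidCQ B).Infinite ↔ ∃ m ⊆ B, ∃ w x, IsPump (run act m) w x := by
  rw [← Set.infinite_image_iff CQ.stackMap_injective.injOn, CQ.stackMap_image_genSubmonoidCQ,
    infinite_image_run_iff_exists_isPump isStackMap_act exists_hasWindow_act]

theorem finite_genSubmonoidCQ_iff_exists_isTrap (B : List Term) :
    (genSubmonoidCQ B).Finite ↔ ∃ N W, IsTrap act B N W := by
  rw [← Set.finite_image_iff CQ.stackMap_injective.injOn, CQ.stackMap_image_genSubmonoidCQ,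
    finite_image_run_iff_exists_isTrap isStackMap_act exists_hasWindow_act]

section Computability

open Encodable (encode decode encode_list_cons)
open Denumerable (ofNat ofNat_encode)

theorem Term.encodeTerm_injective : Function.Injective encodeTerm := by
  intro a
  induction a with
  | I | L | R => intro b h; cases b <;> simp [encodeTerm] at h ⊢
  | comp a a' iha iha' | pair a a' iha iha' =>
    intro b h
    cases b <;> simp only [encodeTerm] at h <;> try lia
    obtain ⟨ha, ha'⟩ : _ ∧ _ := by simpa using h
    rw [iha ha, iha' ha']

theorem Term.encodeTerm_surjective : Function.Surjective encodeTerm := by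
  intro n
  induction n using Nat.strong_induction_on with | _ n ih =>
  rcases n with _ | _ | _ | n
  · exact ⟨I, rfl⟩
  · exact ⟨L, rfl⟩
  · exact ⟨R, rfl⟩
  · obtain ⟨a, ha⟩ := ih (n / 2).unpair.1 (by have := Nat.unpair_left_le (n / 2); lia)
    obtain ⟨b, hb⟩ := ih (n / 2).unpair.2 (by have := Nat.unpair_right_le (n / 2); lia)
    rcases Nat.mod_two_eq_zero_or_one n with hn | hn
    · exact ⟨comp a b, by rw [encodeTerm, ha, hb, Nat.pair_unpair]; lia⟩
    · exact ⟨pair a b, by rw [encodeTerm, ha, hb, Nat.pair_unpair]; lia⟩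

noncomputable instance : Denumerable Term :=
  .mk' (.ofBijective encodeTerm ⟨Term.encodeTerm_injective, Term.encodeTerm_surjective⟩)

theorem encodeTermList_eq_encode (B : List Term) : encodeTermList B = encode B := by
  induction B with
  | nil => rfl
  | cons a B ih => rw [encodeTermList, ih, encode_list_cons]; rfl

section Primrec

variable {α β σ : Type*} [Primcodable α] [Primcodable β] [Primcodable σ]

theorem Term.primrec_casesOn {t : α → Term} {i l r : α → σ} {c p : α → Term × Term → σ}
    (ht : Primrec t) (hi : Primrec i) (hl : Primrec l) (hr : Primrec r) (hc : Primrec₂ c)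
    (hp : Primrec₂ p) :
    @Primrec α σ _ _ fun a => Term.casesOn (t a) (i a) (l a) (r a) (fun x y => c a (x, y))
      fun x y => p a (x, y) := by
  have hcode : Primrec fun a => encode (t a) := Primrec.encode.comp ht
  have hunpair : Primrec fun a => ((encode (t a) - 3) / 2).unpair :=
    Primrec.unpair.comp (Primrec.nat_div.comp (Primrec.nat_sub.comp hcode (.const 3)) (.const 2))
  have hsub : Primrec fun a => ((encode (t a) - 3) / 2).unpair.map (ofNat Term) (ofNat Term) :=
    .pair ((Primrec.ofNat Term).comp (Primrec.fst.comp hunpair))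
      ((Primrec.ofNat Term).comp (Primrec.snd.comp hunpair))
  refine Primrec.of_eq (.ite (Primrec.eq.comp hcode (.const 0)) hi
    (.ite (Primrec.eq.comp hcode (.const 1)) hl
    (.ite (Primrec.eq.comp hcode (.const 2)) hr
    (.ite (Primrec.eq.comp (Primrec.nat_mod.comp hcode (.const 2)) (.const 1))
      (hc.comp .id hsub) (hp.comp .id hsub))))) fun a => ?_
  have hencode (x : Term) : encode x = encodeTerm x := rfl
  have hofNat (x : Term) : ofNat Term (encodeTerm x) = x := ofNat_encode x
  have hhalf (k : ℕ) : (2 * k + 1) / 2 = k := by lia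
  rcases t a with _ | _ | _ | ⟨x, y⟩ | ⟨x, y⟩ <;> simp [hencode, hofNat, hhalf, encodeTerm]

theorem primrecRel_mem : PrimrecRel fun (a : α) (l : List α) => a ∈ l :=
  ((PrimrecRel.exists_mem_list Primrec.eq).comp₂ Primrec₂.right Primrec₂.left).of_eq (by simp)

theorem primrecRel_subset : PrimrecRel fun l m : List α => l ⊆ m :=
  primrecRel_mem.forall_mem_list

theorem rePred_exists {P : α → β → Prop} (hP : PrimrecRel P) : REPred fun a => ∃ b, P a b := by
  classical
  have hsearch : Primrec₂ fun (a : α) (n : ℕ) =>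
      (decode (α := β) n).bind fun b => if P a b then some b else none :=
    Primrec.option_bind (Primrec.decode.comp .snd)
      (.ite (hP.comp (Primrec.fst.comp .fst) .snd) (Primrec.option_some.comp .snd) (.const none))
  refine (Partrec.rfindOpt hsearch.to_comp).dom_re.of_eq fun a => ?_
  rw [Nat.rfindOpt_dom]
  constructor
  · rintro ⟨n, c, hc⟩
    obtain ⟨b, -, hb⟩ := Option.bind_eq_some_iff.1 hc
    exact ⟨b, by_contra fun hab => by simp [hab] at hb⟩
  · rintro ⟨b, hb⟩
    exact ⟨encode b, b, by simp [hb]⟩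

end Primrec

/-- One step of a machine computing `run act l w` from the state `(l, w)`. -/
def machineStep : List Term × List Bool → List Term × List Bool
  | ([], w) => ([], w)
  | (I :: l, w) => (l, w)
  | (L :: l, w) => (l, true :: w)
  | (R :: l, w) => (l, false :: w)
  | (comp a b :: l, w) => (a :: b :: l, w)
  | (pair a b :: l, []) => (pair a b :: l, [])
  | (pair a _ :: l, true :: w) => (a :: l, w)
  | (pair _ b :: l, false :: w) => (b :: l, w)

/-- A bound on the number of steps after which the machine started with the program `l` halts: the
head of the program is replaced by terms whose codes have a smaller sum. -/
def fuel (l : List Term) : ℕ :=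
  l.foldr (fun a n => encodeTerm a + 1 + n) 0

/-- The result read off a halting state; the machine gets stuck when `run act` is undefined. -/
def machineOutput (q : List Term × List Bool) : Option (List Bool) :=
  if q.1 = [] then some q.2 else none

theorem run_act_machineStep (q : List Term × List Bool) :
    run act (machineStep q).1 (machineStep q).2 = run act q.1 q.2 := by
  rcases q with ⟨_ | ⟨_ | _ | _ | ⟨a, b⟩ | ⟨a, b⟩, l⟩, w⟩
  case cons.comp => exact (Option.bind_assoc (act a w) (act b) (run act l)).symm
  case cons.pair => rcases w with _ | ⟨_ | _, w⟩ <;> rfl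
  all_goals rfl

theorem machineOutput_of_machineStep_eq_self {q : List Term × List Bool} (h : machineStep q = q) :
    machineOutput q = run act q.1 q.2 := by
  rcases q with ⟨_ | ⟨_ | _ | _ | ⟨a, b⟩ | ⟨a, b⟩, l⟩, w⟩
  case cons.pair =>
    rcases w with _ | ⟨_ | _, w⟩
    · rfl
    all_goals simp [machineStep] at h
  case nil => rfl
  all_goals simp [machineStep] at h

theorem machineStep_eq_self_or_fuel_lt (q : List Term × List Bool) :
    machineStep q = q ∨ fuel (machineStep q).1 < fuel q.1 := by
  have hcons (a : Term) (l : List Term) : fuel (a :: l) = encodeTerm a + 1 + fuel l := rfl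
  rcases q with ⟨_ | ⟨_ | _ | _ | ⟨a, b⟩ | ⟨a, b⟩, l⟩, w⟩
  case nil => exact .inl rfl
  case cons.comp =>
    have := Nat.add_le_pair (encodeTerm a) (encodeTerm b)
    refine .inr ?_
    simp only [machineStep, hcons, encodeTerm]
    lia
  case cons.pair =>
    have := Nat.add_le_pair (encodeTerm a) (encodeTerm b)
    rcases w with _ | ⟨_ | _, w⟩
    · exact .inl rfl
    all_goals
      refine .inr ?_
      simp only [machineStep, hcons, encodeTerm]
      lia
  all_goals
    refine .inr ?_
    simp only [machineStep, hcons]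
    lia

theorem machineOutput_iterate_machineStep {n : ℕ} {q : List Term × List Bool} (h : fuel q.1 ≤ n) :
    machineOutput (machineStep^[n] q) = run act q.1 q.2 := by
  induction n generalizing q with
  | zero =>
    have hq : machineStep q = q := (machineStep_eq_self_or_fuel_lt q).resolve_right (by lia)
    exact machineOutput_of_machineStep_eq_self hq
  | succ n ih =>
    rcases machineStep_eq_self_or_fuel_lt q with hq | hq
    · rw [Function.iterate_fixed hq, machineOutput_of_machineStep_eq_self hq]
    · rw [Function.iterate_succ_apply, ih (by lia), run_act_machineStep]

theorem primrec_machineStep : Primrec machineStep := by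
  have hprogram : Primrec fun x : (List Term × List Bool) × Term × List Term => x.2.2 :=
    .comp .snd .snd
  have hstack : Primrec fun x : (List Term × List Bool) × Term × List Term => x.1.2 :=
    .comp .snd .fst
  have hbranch : Primrec₂ fun (x : (List Term × List Bool) × Term × List Term)
      (c : Term × Term) => x.1.2.casesOn (motive := fun _ => List Term × List Bool) x.1
        fun b w => ((bif b then c.1 else c.2) :: x.2.2, w) :=
    Primrec.list_casesOn (hstack.comp .fst) (Primrec.fst.comp .fst)
      (Primrec.pair (Primrec.list_cons.comp (.cond (Primrec.fst.comp .snd)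
        (Primrec.fst.comp (Primrec.snd.comp .fst)) (Primrec.snd.comp (Primrec.snd.comp .fst)))
        (hprogram.comp (Primrec.fst.comp .fst))) (Primrec.snd.comp .snd)).to₂
  have hcomp : Primrec₂ fun (x : (List Term × List Bool) × Term × List Term) (c : Term × Term) =>
      (c.1 :: c.2 :: x.2.2, x.1.2) :=
    (Primrec.pair (Primrec.list_cons.comp (Primrec.fst.comp .snd)
      (Primrec.list_cons.comp (Primrec.snd.comp .snd) (hprogram.comp .fst)))
      (hstack.comp .fst)).to₂
  have hpush (b : Bool) := Primrec.pair hprogram (Primrec.list_cons.comp (.const b) hstack)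
  have hhead := Term.primrec_casesOn (Primrec.fst.comp .snd) (.pair hprogram hstack)
    (hpush true) (hpush false) hcomp hbranch
  refine Primrec.of_eq (Primrec.list_casesOn .fst .id hhead.to₂) ?_
  rintro ⟨_ | ⟨_ | _ | _ | ⟨a, b⟩ | ⟨a, b⟩, l⟩, w⟩
  case cons.pair => rcases w with _ | ⟨_ | _, w⟩ <;> rfl
  all_goals rfl

theorem primrec_fuel : Primrec fuel :=
  Primrec.list_foldr .id (.const 0)
    (Primrec.nat_add.comp (Primrec.succ.comp (Primrec.encode.comp (Primrec.fst.comp .snd)))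
      (Primrec.snd.comp .snd)).to₂

theorem primrec_machineOutput : Primrec machineOutput :=
  .ite (Primrec.eq.comp .fst (.const [])) (Primrec.option_some.comp .snd) (.const none)

theorem primrec_run_act : Primrec₂ (run act) :=
  Primrec.of_eq (primrec_machineOutput.comp <| Primrec.nat_iterate (primrec_fuel.comp .fst) .id
    (primrec_machineStep.comp Primrec.snd).to₂) fun _ => machineOutput_iterate_machineStep le_rfl

/-- The stacks of height `n`. -/
def stacksOfLength (n : ℕ) : List (List Bool) :=
  n.rec [[]] fun _ l => l.map (List.cons true) ++ l.map (List.cons false)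

theorem mem_stacksOfLength {n : ℕ} {w : List Bool} : w ∈ stacksOfLength n ↔ w.length = n := by
  induction n generalizing w with
  | zero => simp [stacksOfLength]
  | succ n ih =>
    rw [stacksOfLength, List.mem_append]
    rcases w with _ | ⟨_ | _, w⟩ <;> simp [← ih, stacksOfLength]

theorem primrec_stacksOfLength : Primrec stacksOfLength := by
  have hmap (b : Bool) : Primrec fun x : ℕ × List (List Bool) => x.2.map (List.cons b) :=
    Primrec.list_map .snd (Primrec.list_cons.comp (.const b) Primrec.snd).to₂
  exact Primrec.nat_rec₁ _ (Primrec.list_append.comp (hmap true) (hmap false)).to₂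

theorem primrecRel_isPump :
    PrimrecRel fun (m : List Term) (c : List Bool × List Bool) => IsPump (run act m) c.1 c.2 := by
  have hw : Primrec fun x : List Term × List Bool × List Bool => x.2.1 := .comp .fst .snd
  have hx : Primrec fun x : List Term × List Bool × List Bool => x.2.2 := .comp .snd .snd
  have hwx := Primrec.list_append.comp hw hx
  have hrun := primrec_run_act.comp Primrec.fst hw
  exact (Primrec.eq.comp hx (.const [])).not.and
    ((Primrec.eq.comp hrun (Primrec.option_some.comp hwx)).or
      ((Primrec.eq.comp hrun (.const none)).and
        (Primrec.eq.comp (primrec_run_act.comp Primrec.fst hwx) (Primrec.option_some.comp hw))))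

theorem primrec_act : Primrec₂ act :=
  Primrec.of_eq (primrec_run_act.comp (Primrec.list_cons.comp .fst (.const [])) .snd) fun x =>
    Option.bind_fun_some (act x.1 x.2)

theorem primrecRel_isTrap :
    PrimrecRel fun (B : List Term) (c : ℕ × List (List Bool)) => IsTrap act B c.1 c.2 := by
  have hstep : PrimrecRel fun (a : Term) (x : List Bool × List (List Bool)) =>
      ∃ v ∈ x.2, act a x.1 = some v :=
    (PrimrecRel.exists_mem_list (R := fun (v : List Bool) (o : Option (List Bool)) => o = some v)
      (Primrec.eq.comp .snd (Primrec.option_some.comp .fst))).comp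
      (Primrec.snd.comp .snd) (primrec_act.comp .fst (Primrec.fst.comp .snd))
  have hclosed : PrimrecRel fun (w : List Bool) (x : List Term × List (List Bool)) =>
      ∀ a ∈ x.1, ∃ v ∈ x.2, act a w = some v :=
    hstep.forall_mem_list.comp (Primrec.fst.comp .snd) (.pair .fst (Primrec.snd.comp .snd))
  have hstacks : PrimrecRel fun (N : ℕ) (W : List (List Bool)) => ∀ w, w.length = N → w ∈ W :=
    (primrecRel_mem.forall_mem_list.comp (primrec_stacksOfLength.comp .fst) .snd).of_eq fun x => by
      simp only [mem_stacksOfLength]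
  have hW : Primrec fun x : List Term × ℕ × List (List Bool) => x.2.2 := .comp .snd .snd
  exact (hstacks.comp (Primrec.fst.comp .snd) hW).and
    (hclosed.forall_mem_list.comp hW (.pair .fst hW))

theorem computablePred_infinite_genSubmonoidCQ :
    ComputablePred fun B : List Term => (genSubmonoidCQ B).Infinite := by
  refine ComputablePred.computable_iff_re_compl_re'.2 ⟨?_, ?_⟩
  · have hpump : PrimrecRel fun (B : List Term) (c : List Term × List Bool × List Bool) =>
        c.1 ⊆ B ∧ IsPump (run act c.1) c.2.1 c.2.2 :=
      (primrecRel_subset.comp (Primrec.fst.comp .snd) .fst).and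
        (primrecRel_isPump.comp (Primrec.fst.comp .snd) (Primrec.snd.comp .snd))
    refine (rePred_exists hpump).of_eq fun B => ?_
    rw [infinite_genSubmonoidCQ_iff_exists_isPump]
    simp only [Prod.exists, exists_and_left]
  · refine (rePred_exists primrecRel_isTrap).of_eq fun B => ?_
    rw [Set.not_infinite, finite_genSubmonoidCQ_iff_exists_isTrap, Prod.exists]

end Computability

/-- Theorem 4: it is decidable (uniformly in the finite set `B`) whether the
submonoid of CQ generated by `B` is infinite. -/
theorem infinite_generated_submonoid_CQ_decidable :
    ∃ f : ℕ → Bool, Computable f ∧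
      ∀ B : List Term,
        (f (encodeTermList B) = true ↔ (genSubmonoidCQ B).Infinite) := by
  obtain ⟨_, hdec⟩ := computablePred_infinite_genSubmonoidCQ
  refine ⟨fun n => decide (genSubmonoidCQ (Denumerable.ofNat (List Term) n)).Infinite,
    hdec.comp (Primrec.ofNat (List Term)).to_comp, fun B => ?_⟩
  beta_reduce
  rw [encodeTermList_eq_encode, Denumerable.ofNat_encode, decide_eq_true_iff]
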